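/- Telescoping bound for the log-determinant term under a random-feature update (key estimate in the proof of Theorem 4): Let K be an n×n real symmetric positive semidefinite matrix, let φ ∈ ℝⁿ, let σ > 0, and let J ≥ 1 be a natural number. Define K' = (J/(J+1))·K + (1/(J+1))·(φφᵀ). Then log det(K' + σ²·I) − log det(K + σ²·I) ≤ log(1 + ‖φ‖² / (σ² · (J+1))) ≤ ‖φ‖² / (σ² · (J+1)). -/

import Mathlib

open Matrix

/-!
Write `s = σ²`, `t = J + 1` and `c = J / (J + 1) ≤ 1`. Since `det` is monotone on positive
semidefinite matrices for the Loewner order, replacing `c • K` by `K` can only increase the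
determinant, so only the rank-one term matters. The matrix determinant lemma evaluates its
contribution as `det (M + t⁻¹ φφᵀ) = det M * (1 + t⁻¹ φᵀM⁻¹φ)` with `M = K + sI`, and `M ≥ sI`
gives `φᵀM⁻¹φ ≤ ‖φ‖² / s`.
-/

theorem det_add_vecMulVec {n R : Type*} [Fintype n] [DecidableEq n] [CommRing R]
    {A : Matrix n n R} (hA : IsUnit A.det) (u v : n → R) :
    (A + vecMulVec u v).det = A.det * (1 + v ⬝ᵥ A⁻¹ *ᵥ u) := by
  rw [vecMulVec_eq Unit, det_add_replicateCol_mul_replicateRow hA, Matrix.mul_assoc,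
    ← replicateCol_mulVec, det_unique (n := Unit)]
  simp [replicateRow_mul_replicateCol_apply]

section LoewnerOrder

open scoped ComplexOrder MatrixOrder

variable {n 𝕜 : Type*} [DecidableEq n] [RCLike 𝕜] {A B : Matrix n n 𝕜} {s : ℝ}

theorem posDef_of_smul_one_le (hs : 0 < s) (hA : s • 1 ≤ A) : A.PosDef := by
  simpa using (PosDef.one.smul hs).add_posSemidef (le_iff.mp hA)

variable [Fintype n]

theorem one_le_det_of_one_le (hA : 1 ≤ A) : 1 ≤ A.det := by
  have hAherm : A.IsHermitian := ((zero_le_one' (Matrix n n 𝕜)).trans hA).posSemidef.isHermitian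
  have hspec : ∀ x ∈ spectrum ℝ A, 1 ≤ x := (CFC.one_le_iff A).mp hA
  rw [hAherm.det_eq_prod_eigenvalues]
  exact_mod_cast Finset.one_le_prod fun i _ ↦ hspec _ (hAherm.eigenvalues_mem_spectrum_real i)

theorem det_le_det_of_le (hA : A.PosSemidef) (hAB : A ≤ B) : A.det ≤ B.det := by
  by_cases hdet : A.det = 0
  · have hB : B.PosSemidef := by simpa using hA.add (le_iff.mp hAB)
    exact hdet ▸ hB.det_nonneg
  obtain ⟨C, rfl⟩ := CStarAlgebra.nonneg_iff_eq_star_mul_self.mp hA.nonneg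
  have hC : IsUnit C.det := by
    refine isUnit_iff_ne_zero.mpr fun h ↦ hdet ?_
    rw [det_mul, h, mul_zero]
  have hstar : star C⁻¹ * star C = 1 := by rw [← star_mul, mul_nonsing_inv _ hC, star_one]
  have hstar' : star C * star C⁻¹ = 1 := by rw [← star_mul, nonsing_inv_mul _ hC, star_one]
  have hconj : 1 ≤ star C⁻¹ * B * C⁻¹ := calc
    1 = star C⁻¹ * (star C * C) * C⁻¹ := by
      rw [← mul_assoc, hstar, one_mul, mul_nonsing_inv _ hC]
    _ ≤ star C⁻¹ * B * C⁻¹ := star_left_conjugate_le_conjugate hAB _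
  calc (star C * C).det
    _ ≤ (star C * C).det * (star C⁻¹ * B * C⁻¹).det :=
      le_mul_of_one_le_right hA.det_nonneg (one_le_det_of_one_le hconj)
    _ = (star C * (star C⁻¹ * B * C⁻¹) * C).det := by
      simp only [det_mul]
      ring
    _ = B.det := by
      rw [← mul_assoc, ← mul_assoc, hstar', one_mul, mul_assoc, nonsing_inv_mul _ hC, mul_one]

theorem inv_le_inv_smul_one_of_smul_one_le (hs : 0 < s) (hA : s • 1 ≤ A) : A⁻¹ ≤ s⁻¹ • 1 := by
  have hApos : A.PosDef := posDef_of_smul_one_le hs hA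
  have hAu : IsUnit A.det := hApos.det_pos.ne'.isUnit
  have hN : (A - s • 1).PosSemidef := le_iff.mp hA
  have hfactor : s⁻¹ • 1 - A⁻¹ =
      s⁻¹ • (A⁻¹ᴴ * ((A - s • 1) ^ 2 + s • (A - s • 1)) * A⁻¹) := calc
    s⁻¹ • 1 - A⁻¹ = s⁻¹ • ((A - s • 1) * A⁻¹) := by
      rw [sub_mul, mul_nonsing_inv _ hAu, smul_mul_assoc, one_mul, smul_sub,
        inv_smul_smul₀ hs.ne']
    _ = s⁻¹ • (A⁻¹ᴴ * (A * (A - s • 1)) * A⁻¹) := by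
      rw [hApos.inv.isHermitian.eq, nonsing_inv_mul_cancel_left _ _ hAu]
    _ = s⁻¹ • (A⁻¹ᴴ * ((A - s • 1) ^ 2 + s • (A - s • 1)) * A⁻¹) := by
      congr 3
      simp [pow_two, sub_mul]
  rw [le_iff, hfactor]
  exact (((hN.pow 2).add (hN.smul hs.le)).conjTranspose_mul_mul_same A⁻¹).smul
    (inv_nonneg.mpr hs.le)

theorem dotProduct_inv_mulVec_le (hs : 0 < s) (hA : s • 1 ≤ A) (u : n → 𝕜) :
    star u ⬝ᵥ A⁻¹ *ᵥ u ≤ s⁻¹ • (star u ⬝ᵥ u) := by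
  have h := (le_iff.mp (inv_le_inv_smul_one_of_smul_one_le hs hA)).dotProduct_mulVec_nonneg u
  rwa [sub_mulVec, smul_mulVec, one_mulVec, dotProduct_sub, dotProduct_smul, sub_nonneg] at h

theorem det_add_smul_vecMulVec_star_le (hs : 0 < s) (hA : s • 1 ≤ A) {a : ℝ} (ha : 0 ≤ a)
    (u : n → 𝕜) :
    (A + a • vecMulVec u (star u)).det ≤ A.det * (1 + a • s⁻¹ • (star u ⬝ᵥ u)) := by
  have hdet : 0 < A.det := (posDef_of_smul_one_le hs hA).det_pos
  rw [← smul_vecMulVec, det_add_vecMulVec hdet.ne'.isUnit, mulVec_smul, dotProduct_smul]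
  gcongr
  exact dotProduct_inv_mulVec_le hs hA u

end LoewnerOrder

open scoped MatrixOrder in
theorem log_det_telescoping_bound_general {ι : Type*} [Fintype ι] [DecidableEq ι]
    {K : Matrix ι ι ℝ} (hK : K.PosSemidef) (φ : ι → ℝ) {s c t : ℝ} (hs : 0 < s)
    (hc₀ : 0 ≤ c) (hc₁ : c ≤ 1) (ht : 0 < t) :
    Real.log (c • K + (1 / t) • vecMulVec φ φ + s • (1 : Matrix ι ι ℝ)).det
        - Real.log (K + s • (1 : Matrix ι ι ℝ)).det
      ≤ Real.log (1 + (φ ⬝ᵥ φ) / (s * t)) ∧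
    Real.log (1 + (φ ⬝ᵥ φ) / (s * t)) ≤ (φ ⬝ᵥ φ) / (s * t) := by
  set N := (1 / t) • vecMulVec φ φ
  set M := K + s • (1 : Matrix ι ι ℝ)
  have hN : N.PosSemidef := (posSemidef_vecMulVec_self_star φ).smul (by positivity)
  have hsI : (s • (1 : Matrix ι ι ℝ)).PosDef := PosDef.one.smul hs
  have hM : s • 1 ≤ M := le_add_of_nonneg_left hK.nonneg
  have hMdet : 0 < M.det := (posDef_of_smul_one_le hs hM).det_pos
  have hupdate : (c • K + N + s • (1 : Matrix ι ι ℝ)).PosDef :=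
    .posSemidef_add ((hK.smul hc₀).add hN) hsI
  have hx : 0 ≤ (φ ⬝ᵥ φ) / (s * t) :=
    div_nonneg (dotProduct_star_self_nonneg φ) (by positivity)
  have hcK : c • K ≤ K := by
    simpa [le_iff, sub_smul] using hK.smul (sub_nonneg.mpr hc₁)
  have hdet : (c • K + N + s • (1 : Matrix ι ι ℝ)).det
      ≤ M.det * (1 + (φ ⬝ᵥ φ) / (s * t)) := calc
    _ ≤ (K + N + s • (1 : Matrix ι ι ℝ)).det := det_le_det_of_le hupdate.posSemidef (by gcongr)
    _ = (M + N).det := by rw [add_right_comm]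
    _ ≤ M.det * (1 + (1 / t) • s⁻¹ • (φ ⬝ᵥ φ)) :=
      det_add_smul_vecMulVec_star_le hs hM (by positivity) φ
    _ = M.det * (1 + (φ ⬝ᵥ φ) / (s * t)) := by
      simp only [smul_eq_mul]
      field_simp
  constructor
  · rw [sub_le_iff_le_add', ← Real.log_mul hMdet.ne' (by positivity)]
    exact Real.log_le_log hupdate.det_pos hdet
  · simpa using Real.log_le_sub_one_of_pos (add_pos_of_pos_of_nonneg one_pos hx)

/-- Telescoping bound for the log-determinant term under a random-feature update:
with `K' = (J/(J+1))⬝K + (1/(J+1))⬝φφᵀ`,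
`log det(K' + σ²I) − log det(K + σ²I) ≤ log(1 + ‖φ‖²/(σ²(J+1))) ≤ ‖φ‖²/(σ²(J+1))`,
where `‖φ‖² = φ ⬝ᵥ φ`. -/
theorem log_det_telescoping_bound
    (n : ℕ) (K : Matrix (Fin n) (Fin n) ℝ) (hK : K.PosSemidef)
    (φ : Fin n → ℝ) (σ : ℝ) (hσ : 0 < σ) (J : ℕ) (hJ : 1 ≤ J) :
    Real.log (((J : ℝ) / (J + 1)) • K + (1 / ((J : ℝ) + 1)) • vecMulVec φ φ
          + σ ^ 2 • (1 : Matrix (Fin n) (Fin n) ℝ)).det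
        - Real.log (K + σ ^ 2 • (1 : Matrix (Fin n) (Fin n) ℝ)).det
      ≤ Real.log (1 + (φ ⬝ᵥ φ) / (σ ^ 2 * ((J : ℝ) + 1))) ∧
    Real.log (1 + (φ ⬝ᵥ φ) / (σ ^ 2 * ((J : ℝ) + 1)))
      ≤ (φ ⬝ᵥ φ) / (σ ^ 2 * ((J : ℝ) + 1)) :=
  log_det_telescoping_bound_general hK φ (by positivity) (by positivity)
    (div_le_one_of_le₀ (by linarith) (by positivity)) (by positivity)
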